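/- Let K be an algebraically closed field of characteristic 0, let f and g be nonconstant, relatively prime polynomials in K[t], set A = f² − g², B = 2fg, C = f² + g², and let w be a nonzero constant polynomial. Then the only solutions in positive integers (x, y, z) of (wA)^x + (wB)^y = (wC)^z are (x, y, z) = (2, 2, 2) and (x, y, z) = (2, 1, 1); moreover, (2, 1, 1) is a solution if and only if w·(f + g)² = 1 (equivalently, f = −g ± 1/√w). -/

import Mathlib

open Polynomial

/-!
Put `A = w (f² - g²)`, `B = w (2fg)`, `D = w (f² + g²)`. Both `A² + B² = D²` and
`A ^ x + B ^ y = D ^ z` become symmetric in the three polynomials once arbitrary nonzero constant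
coefficients are allowed. Let `p` be the polynomial of least degree and `e` its exponent; the other
two, `q` and `r`, have equal degree `n`, and splitting `b q² + c r²` into linear factors gives
`n ≤ 2 deg p`. The polynomial abc theorem bounds the exponents of `q` and `r` by `2`. Suppose
`e ≥ 3`. Degrees exclude that `q` and `r` both occur linearly, and divisibility by `p` that both
occur squared. In the mixed case, divisibility by `p²` forces `p²` to be affine in `q`, and then
`r²` is proportional to `s² + s t q + t² q²`, whose discriminant `-3 s² t²` is nonzero; so it is not
a square. The exponents up to `2` are settled by factoring `D² - A²` and `D² - B²`.
-/

section

variable {K : Type*} [Field K] {p q r P Q R : K[X]} {x y z : ℕ}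

/-- A linear relation over `K` between three polynomials in which all coefficients are nonzero.
Working up to coefficients makes the conic and the exponential equation symmetric in their three
polynomials. -/
def FullRelation (P Q R : K[X]) : Prop :=
  ∃ a b c : K, a ≠ 0 ∧ b ≠ 0 ∧ c ≠ 0 ∧ C a * P + C b * Q + C c * R = 0

namespace FullRelation

theorem of_add_eq (h : P + Q = R) : FullRelation P Q R :=
  ⟨1, 1, -1, one_ne_zero, one_ne_zero, neg_ne_zero.2 one_ne_zero, by
    simp only [map_neg, map_one]
    linear_combination h⟩

theorem rotate (h : FullRelation P Q R) : FullRelation Q R P := by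
  obtain ⟨a, b, c, ha, hb, hc, h⟩ := h
  exact ⟨b, c, a, hb, hc, ha, by linear_combination h⟩

theorem swap (h : FullRelation P Q R) : FullRelation P R Q := by
  obtain ⟨a, b, c, ha, hb, hc, h⟩ := h
  exact ⟨a, c, b, ha, hc, hb, by linear_combination h⟩

theorem natDegree_le_max (h : FullRelation P Q R) :
    P.natDegree ≤ max Q.natDegree R.natDegree := by
  obtain ⟨a, b, c, ha, hb, hc, h⟩ := h
  have hP : C a * P = -(C b * Q + C c * R) := by linear_combination h
  rw [← natDegree_C_mul ha, ← natDegree_C_mul (p := Q) hb, ← natDegree_C_mul (p := R) hc, hP,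
    natDegree_neg]
  exact natDegree_add_le _ _

theorem isCoprime (h : FullRelation P Q R) (hPQ : IsCoprime P Q) : IsCoprime Q R := by
  obtain ⟨a, b, c, ha, -, -, h⟩ := h
  have hQR : IsCoprime Q (C a * P) :=
    (isCoprime_mul_unit_left_right (isUnit_C.2 ha.isUnit) Q P).2 hPQ.symm
  rw [show C a * P = -(C b * Q + C c * R) by linear_combination h, IsCoprime.neg_right_iff,
    add_comm, mul_comm (C b)] at hQR
  exact hQR.of_add_mul_left_right.of_mul_right_right

theorem natDegree_pow_lt_of_isCoprime [CharZero K] (h : FullRelation (p ^ x) (q ^ y) (r ^ z))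
    (hpq : IsCoprime p q) (hp : p ≠ 0) (hq : 0 < q.natDegree) (hr : r ≠ 0) (hy : 0 < y) :
    y * q.natDegree < p.natDegree + q.natDegree + r.natDegree := by
  classical
  obtain ⟨a, b, c, ha, hb, hc, h⟩ := h
  have hq0 : q ≠ 0 := ne_zero_of_natDegree_gt hq
  have hCa := (isUnit_C (R := K)).2 ha.isUnit
  have hCb := (isUnit_C (R := K)).2 hb.isUnit
  have hCc := (isUnit_C (R := K)).2 hc.isUnit
  have hpx : C a * p ^ x ≠ 0 := mul_ne_zero hCa.ne_zero (pow_ne_zero x hp)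
  have hqy : C b * q ^ y ≠ 0 := mul_ne_zero hCb.ne_zero (pow_ne_zero y hq0)
  have hrz : C c * r ^ z ≠ 0 := mul_ne_zero hCc.ne_zero (pow_ne_zero z hr)
  have hcop : IsCoprime (C a * p ^ x) (C b * q ^ y) :=
    (isCoprime_mul_units_left hCa hCb _ _).2 hpq.pow
  have hdeg : (C b * q ^ y).natDegree = y * q.natDegree := by rw [natDegree_C_mul hb, natDegree_pow]
  have hrad : UniqueFactorizationMonoid.radical (C a * p ^ x * (C b * q ^ y) * (C c * r ^ z)) ∣
      p * q * r := by
    refine (UniqueFactorizationMonoid.exists_dvd_pow_iff_radical_dvd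
      (mul_ne_zero (mul_ne_zero hpx hqy) hrz)).1 ⟨x + y + z, ?_⟩
    rw [mul_pow, mul_pow]
    refine mul_dvd_mul (mul_dvd_mul (hCa.mul_left_dvd.2 ?_) (hCb.mul_left_dvd.2 ?_))
      (hCc.mul_left_dvd.2 ?_) <;> exact pow_dvd_pow _ (by omega)
  have hrad_le := natDegree_le_of_dvd hrad (mul_ne_zero (mul_ne_zero hp hq0) hr)
  rw [natDegree_mul (mul_ne_zero hp hq0) hr, natDegree_mul hp hq0] at hrad_le
  rcases Polynomial.abc hpx hqy hrz hcop h with ⟨-, habc, -⟩ | ⟨-, hconst, -⟩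
  · omega
  · have : 0 < y * q.natDegree := Nat.mul_pos hy hq
    have := derivative_eq_zero.1 hconst
    omega

/-- The coefficients `s`, `t` of `q`, `r` at `n = deg q` satisfy `b s² + c t² = 0`, so `b q² + c r²`
splits into linear factors over `K` itself. -/
theorem exists_mul_eq_sq [NeZero (2 : K)] (h : FullRelation (p ^ 2) (q ^ 2) (r ^ 2))
    (hlt : p.natDegree < q.natDegree) :
    ∃ (u v : K[X]) (e : K), e ≠ 0 ∧ q.natDegree ≤ u.natDegree ∧ u * v = C e * p ^ 2 := by
  have hr_le : r.natDegree ≤ q.natDegree := by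
    have := h.rotate.rotate.natDegree_le_max
    simp only [natDegree_pow] at this
    omega
  obtain ⟨a, b, c, ha, hb, -, h⟩ := h
  set n := q.natDegree with hn
  set s := q.coeff n
  set t := r.coeff n
  have hs : s ≠ 0 := leadingCoeff_ne_zero.2 (ne_zero_of_natDegree_gt hlt)
  have hst : b * s ^ 2 + c * t ^ 2 = 0 := by
    have hcoeff := congrArg (coeff · (2 * n)) h
    simpa only [coeff_add, coeff_C_mul, coeff_zero, coeff_eq_zero_of_natDegree_lt hlt, ne_eq,
      OfNat.ofNat_ne_zero, not_false_eq_true, zero_pow, mul_zero, zero_add,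
      coeff_pow_of_natDegree_le hlt.le, coeff_pow_of_natDegree_le hn.ge,
      coeff_pow_of_natDegree_le hr_le] using hcoeff
  have ht : t ≠ 0 := by
    intro ht
    simp [ht, hb, hs] at hst
  refine ⟨C t * q + C s * r, C b * (C t * q - C s * r), -(a * t ^ 2),
    neg_ne_zero.2 (mul_ne_zero ha (pow_ne_zero 2 ht)), le_natDegree_of_ne_zero ?_, ?_⟩
  · rw [coeff_add, coeff_C_mul, coeff_C_mul]
    convert mul_ne_zero two_ne_zero (mul_ne_zero hs ht) using 1
    ring
  · have hst' : C b * C s ^ 2 + C c * C t ^ 2 = 0 := by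
      simpa only [map_add, map_mul, map_pow, map_zero] using congrArg C hst
    simp only [map_neg, map_mul, map_pow]
    linear_combination C t ^ 2 * h - r ^ 2 * hst'

theorem natDegree_le_two_mul [NeZero (2 : K)] (h : FullRelation (p ^ 2) (q ^ 2) (r ^ 2))
    (hp : p ≠ 0) : q.natDegree ≤ 2 * p.natDegree := by
  rcases le_or_gt q.natDegree p.natDegree with hle | hlt
  · omega
  · obtain ⟨u, v, e, he, hu, huv⟩ := h.exists_mul_eq_sq hlt
    have hdvd : u ∣ p ^ 2 := (isUnit_C.2 he.isUnit).dvd_mul_left.1 ⟨v, huv.symm⟩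
    calc q.natDegree ≤ u.natDegree := hu
      _ ≤ (p ^ 2).natDegree := natDegree_le_of_dvd hdvd (pow_ne_zero 2 hp)
      _ = 2 * p.natDegree := natDegree_pow p 2

theorem eq_two_of_sq_sq (hconic : FullRelation (p ^ 2) (q ^ 2) (r ^ 2))
    (h : FullRelation (p ^ x) (q ^ 2) (r ^ 2)) (hpq : IsCoprime p q) (hp : 0 < p.natDegree)
    (hx : 0 < x) : x = 2 := by
  obtain ⟨a, b, c, ha, -, hc, hconic⟩ := hconic
  obtain ⟨α, β, γ, hα, -, hγ, h⟩ := h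
  have helim : C (c * α) * p ^ x - C (γ * a) * p ^ 2 = C (γ * b - c * β) * q ^ 2 := by
    simp only [map_sub, map_mul]
    linear_combination C c * h - C γ * hconic
  have hdvd : p ∣ C (γ * b - c * β) := by
    refine (hpq.pow_right (n := 2)).dvd_of_dvd_mul_right (helim ▸ dvd_sub ?_ ?_)
    · exact (dvd_pow_self p hx.ne').mul_left _
    · exact (dvd_pow_self p two_ne_zero).mul_left _
  have hzero : C (γ * b - c * β) = 0 := by
    refine eq_zero_of_dvd_of_natDegree_lt hdvd ?_
    rwa [natDegree_C]
  rw [hzero, zero_mul, sub_eq_zero] at helim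
  have hdeg := congrArg natDegree helim
  rw [natDegree_C_mul (mul_ne_zero hc hα), natDegree_C_mul (mul_ne_zero hγ ha), natDegree_pow,
    natDegree_pow] at hdeg
  exact Nat.eq_of_mul_eq_mul_right hp hdeg

theorem exists_sq_dvd_affine (hconic : FullRelation (p ^ 2) (q ^ 2) (r ^ 2))
    (h : FullRelation (p ^ x) q (r ^ 2)) (hpq : IsCoprime p q) (hx : 2 ≤ x) :
    ∃ s t : K, s ≠ 0 ∧ t ≠ 0 ∧ p ^ 2 ∣ C s + C t * q := by
  obtain ⟨a, b, c, -, hb, hc, hconic⟩ := hconic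
  obtain ⟨α, β, γ, -, hβ, hγ, h⟩ := h
  refine ⟨c * β, -(γ * b), mul_ne_zero hc hβ, neg_ne_zero.2 (mul_ne_zero hγ hb), ?_⟩
  have helim : q * (C (c * β) + C (-(γ * b)) * q) = C (γ * a) * p ^ 2 - C (c * α) * p ^ x := by
    simp only [map_neg, map_mul]
    linear_combination C c * h - C γ * hconic
  refine (hpq.pow_left (m := 2)).dvd_of_dvd_mul_left (helim ▸ dvd_sub ?_ ?_)
  · exact dvd_mul_left _ _
  · exact (pow_dvd_pow p hx).mul_left _

theorem sq_affine_of_linear_sq (hconic : FullRelation (p ^ 2) (q ^ 2) (r ^ 2))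
    (h : FullRelation (p ^ x) q (r ^ 2)) (hpq : IsCoprime p q) (hx : 2 ≤ x)
    (hq : 0 < q.natDegree) (hdeg : q.natDegree ≤ 2 * p.natDegree) :
    FullRelation (p ^ 2) q 1 := by
  obtain ⟨s, t, hs, ht, k, hk⟩ := hconic.exists_sq_dvd_affine h hpq hx
  have hdeg_affine : (C s + C t * q).natDegree = q.natDegree := by
    rw [add_comm, natDegree_add_C, natDegree_C_mul ht]
  have hprod : p ^ 2 * k ≠ 0 := by
    rw [← hk]
    exact ne_zero_of_natDegree_gt (hdeg_affine ▸ hq)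
  have hk0 : k.natDegree = 0 := by
    rw [hk, natDegree_mul (left_ne_zero_of_mul hprod) (right_ne_zero_of_mul hprod),
      natDegree_pow] at hdeg_affine
    omega
  obtain ⟨κ, rfl⟩ := natDegree_eq_zero.1 hk0
  refine ⟨-κ, t, s, neg_ne_zero.2 (C_ne_zero.1 (right_ne_zero_of_mul hprod)), ht, hs, ?_⟩
  rw [map_neg]
  linear_combination hk

end FullRelation

theorem coeffs_eq_zero_of_quadratic_eq_zero {a b c : K} (hq : 0 < q.natDegree)
    (h : C a + C b * q + C c * q ^ 2 = 0) : a = 0 ∧ b = 0 ∧ c = 0 := by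
  have hcomp : (C a + C b * X + C c * X ^ 2).comp q = 0 := by simpa using h
  have hzero : C a + C b * X + C c * X ^ 2 = 0 := by
    refine (comp_eq_zero_iff.1 hcomp).resolve_right fun hconst => hq.ne' ?_
    rw [hconst.2, natDegree_C]
  refine ⟨?_, ?_, ?_⟩
  · simpa using congrArg (coeff · 0) hzero
  · simpa [coeff_X, coeff_C] using congrArg (coeff · 1) hzero
  · simpa [coeff_X, coeff_C] using congrArg (coeff · 2) hzero

/-- Completing the square turns the hypothesis into a conic relation between the squares of `1`,
`2 t q + s` and `r`, and a conic with a constant coordinate is constant. -/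
theorem natDegree_eq_zero_of_sq_add_mul_add_sq [NeZero (2 : K)] [NeZero (3 : K)] {s t c : K}
    (hs : s ≠ 0) (ht : t ≠ 0) (hc : c ≠ 0)
    (h : C (s ^ 2) + C (s * t) * q + C (t ^ 2) * q ^ 2 = C c * r ^ 2) : q.natDegree = 0 := by
  have hrel : FullRelation (1 ^ 2) ((C (2 * t) * q + C s) ^ 2) (r ^ 2) := by
    refine ⟨3 * s ^ 2, 1, -(2 ^ 2 * c), mul_ne_zero three_ne_zero (pow_ne_zero 2 hs), one_ne_zero,
      neg_ne_zero.2 (mul_ne_zero (pow_ne_zero 2 two_ne_zero) hc), ?_⟩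
    simp only [map_mul, map_pow, map_neg, map_one, map_ofNat] at h ⊢
    linear_combination 4 * h
  have hdeg := hrel.natDegree_le_two_mul one_ne_zero
  rwa [natDegree_add_C, natDegree_C_mul (mul_ne_zero two_ne_zero ht), natDegree_one, mul_zero,
    Nat.le_zero] at hdeg

theorem FullRelation.natDegree_eq_zero_of_pow_four [NeZero (2 : K)] [NeZero (3 : K)]
    (hconic : FullRelation (p ^ 2) (q ^ 2) (r ^ 2)) (h : FullRelation (p ^ 4) q (r ^ 2))
    (haffine : FullRelation (p ^ 2) q 1) : q.natDegree = 0 := by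
  by_contra hq
  obtain ⟨a, b, c, ha, -, hc, hconic⟩ := hconic
  obtain ⟨α, β, γ, -, -, hγ, h⟩ := h
  obtain ⟨l, t, s, hl, ht, hs, haffine⟩ := haffine
  -- Eliminate `r²` between the two relations, then substitute `l p² = -(t q + s)`.
  have helim : C (c * α * s ^ 2 + γ * a * l * s) +
      C (2 * c * α * s * t + c * β * l ^ 2 + γ * a * l * t) * q +
      C (c * α * t ^ 2 - γ * b * l ^ 2) * q ^ 2 = 0 := by
    simp only [map_add, map_sub, map_mul, map_pow, map_ofNat]
    linear_combination C l ^ 2 * C c * h - C l ^ 2 * C γ * hconic +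
      (C c * C α * (C t * q + C s - C l * p ^ 2) + C γ * C a * C l) * haffine
  obtain ⟨hconst, -, hquad⟩ := coeffs_eq_zero_of_quadratic_eq_zero (Nat.pos_of_ne_zero hq) helim
  have hlin : c * α * s + γ * a * l = 0 := by
    apply mul_right_cancel₀ hs
    linear_combination hconst
  have hb : b * l * s = -(a * t ^ 2) := by
    apply mul_left_cancel₀ (mul_ne_zero hγ hl)
    linear_combination t ^ 2 * hlin - s * hquad
  refine hq (natDegree_eq_zero_of_sq_add_mul_add_sq (r := r) (c := c * s * l / a) hs ht
    (div_ne_zero (mul_ne_zero (mul_ne_zero hc hs) hl) ha) ?_)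
  apply mul_left_cancel₀ (C_ne_zero.2 ha)
  have hb' : C b * C l * C s = -(C a * C t ^ 2) := by
    simpa only [map_mul, map_neg, map_pow] using congrArg C hb
  rw [← mul_assoc, ← C_mul, mul_div_cancel₀ _ ha]
  simp only [map_mul, map_pow]
  linear_combination -(C l * C s) * hconic + C a * C s * haffine + q ^ 2 * hb'

/-- The polynomials `p`, `q`, `r` are the coprime homogeneous coordinates of a nonconstant
polynomial curve on a smooth diagonal conic `a X² + b Y² + c Z² = 0`. Coprimality is imposed on one
pair and nonconstancy on one coordinate; the relation carries both over to the others. -/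
structure ConicParametrization (p q r : K[X]) : Prop where
  relation : FullRelation (p ^ 2) (q ^ 2) (r ^ 2)
  isCoprime : IsCoprime p q
  natDegree_pos : 0 < p.natDegree

namespace ConicParametrization

theorem isCoprime_rotate (h : ConicParametrization p q r) : IsCoprime q r :=
  (IsCoprime.pow_iff two_pos two_pos).1 (h.relation.isCoprime h.isCoprime.pow)

theorem ne_zero (h : ConicParametrization p q r) : p ≠ 0 :=
  ne_zero_of_natDegree_gt h.natDegree_pos

theorem natDegree_eq_of_le (h : ConicParametrization p q r) (hpq : p.natDegree ≤ q.natDegree)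
    (hpr : p.natDegree ≤ r.natDegree) : q.natDegree = r.natDegree := by
  have hq := h.relation.rotate.natDegree_le_max
  have hr := h.relation.rotate.rotate.natDegree_le_max
  simp only [natDegree_pow] at hq hr
  omega

section

variable [NeZero (2 : K)]

theorem rotate (h : ConicParametrization p q r) : ConicParametrization q r p where
  relation := h.relation.rotate
  isCoprime := h.isCoprime_rotate
  natDegree_pos := by
    have hq : q ≠ 0 := by
      rintro rfl
      exact not_isUnit_of_natDegree_pos p h.natDegree_pos (isCoprime_zero_right.1 h.isCoprime)
    have hdeg := h.relation.rotate.swap.natDegree_le_two_mul hq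
    have hp := h.natDegree_pos
    omega

theorem swap (h : ConicParametrization p q r) : ConicParametrization p r q where
  relation := h.relation.swap
  isCoprime := h.rotate.isCoprime_rotate.symm
  natDegree_pos := h.natDegree_pos

theorem lt_three_of_linear_linear (h : ConicParametrization p q r)
    (hpq : p.natDegree ≤ q.natDegree) (hpr : p.natDegree ≤ r.natDegree)
    (hrel : FullRelation (p ^ x) q r) : x < 3 := by
  have hqr := h.natDegree_eq_of_le hpq hpr
  have hq := h.relation.natDegree_le_two_mul h.ne_zero
  have hp := h.natDegree_pos
  have hx := hrel.natDegree_le_max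
  rw [natDegree_pow] at hx
  by_contra! hx3
  have : 3 * p.natDegree ≤ x * p.natDegree := Nat.mul_le_mul_right _ hx3
  omega

theorem lt_three_of_linear_sq [NeZero (3 : K)] (h : ConicParametrization p q r)
    (hpq : p.natDegree ≤ q.natDegree) (hpr : p.natDegree ≤ r.natDegree)
    (hrel : FullRelation (p ^ x) q (r ^ 2)) : x < 3 := by
  by_contra! hx3
  have hq := h.rotate.natDegree_pos
  have hqr := h.natDegree_eq_of_le hpq hpr
  have haffine : FullRelation (p ^ 2) q 1 :=
    h.relation.sq_affine_of_linear_sq hrel h.isCoprime (by omega) hq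
      (h.relation.natDegree_le_two_mul h.ne_zero)
  have hx : x = 4 := by
    have hqp : q.natDegree ≤ 2 * p.natDegree := by
      simpa [natDegree_pow] using haffine.rotate.natDegree_le_max
    have hpq' : 2 * p.natDegree ≤ q.natDegree := by
      simpa [natDegree_pow] using haffine.natDegree_le_max
    have hpx := hrel.natDegree_le_max
    have hrx := hrel.rotate.rotate.natDegree_le_max
    simp only [natDegree_pow] at hpx hrx
    have hdeg : x * p.natDegree = 4 * p.natDegree := by omega
    exact Nat.eq_of_mul_eq_mul_right h.natDegree_pos hdeg
  subst hx
  exact hq.ne' (h.relation.natDegree_eq_zero_of_pow_four hrel haffine)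

end

variable [CharZero K]

theorem exponent_le_two_of_natDegree_le (h : ConicParametrization p q r)
    (hpq : p.natDegree ≤ q.natDegree) (hpr : p.natDegree ≤ r.natDegree) (hy : 0 < y)
    (hrel : FullRelation (p ^ x) (q ^ y) (r ^ z)) : y ≤ 2 := by
  have habc := hrel.natDegree_pow_lt_of_isCoprime h.isCoprime h.ne_zero h.rotate.natDegree_pos
    h.rotate.rotate.ne_zero hy
  have hqr := h.natDegree_eq_of_le hpq hpr
  by_contra! hy3
  have : 3 * q.natDegree ≤ y * q.natDegree := Nat.mul_le_mul_right _ hy3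
  omega

theorem exponents_le_two_of_natDegree_le (h : ConicParametrization p q r)
    (hpq : p.natDegree ≤ q.natDegree) (hpr : p.natDegree ≤ r.natDegree)
    (hx : 0 < x) (hy : 0 < y) (hz : 0 < z) (hrel : FullRelation (p ^ x) (q ^ y) (r ^ z)) :
    x ≤ 2 ∧ y ≤ 2 ∧ z ≤ 2 := by
  have hy2 : y ≤ 2 := h.exponent_le_two_of_natDegree_le hpq hpr hy hrel
  have hz2 : z ≤ 2 := h.swap.exponent_le_two_of_natDegree_le hpr hpq hz hrel.swap
  refine ⟨Nat.lt_succ_iff.1 ?_, hy2, hz2⟩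
  obtain rfl | rfl : y = 1 ∨ y = 2 := by omega
  all_goals obtain rfl | rfl : z = 1 ∨ z = 2 := by omega
  · rw [pow_one, pow_one] at hrel
    exact h.lt_three_of_linear_linear hpq hpr hrel
  · rw [pow_one] at hrel
    exact h.lt_three_of_linear_sq hpq hpr hrel
  · rw [pow_one] at hrel
    exact h.swap.lt_three_of_linear_sq hpr hpq hrel.swap
  · have := h.relation.eq_two_of_sq_sq hrel h.isCoprime h.natDegree_pos hx
    omega

theorem exponents_le_two (h : ConicParametrization p q r) (hx : 0 < x) (hy : 0 < y) (hz : 0 < z)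
    (hrel : FullRelation (p ^ x) (q ^ y) (r ^ z)) : x ≤ 2 ∧ y ≤ 2 ∧ z ≤ 2 := by
  obtain ⟨hpq, hpr⟩ | ⟨hqr, hqp⟩ | ⟨hrp, hrq⟩ :
      (p.natDegree ≤ q.natDegree ∧ p.natDegree ≤ r.natDegree) ∨
      (q.natDegree ≤ r.natDegree ∧ q.natDegree ≤ p.natDegree) ∨
      (r.natDegree ≤ p.natDegree ∧ r.natDegree ≤ q.natDegree) := by omega
  · exact h.exponents_le_two_of_natDegree_le hpq hpr hx hy hz hrel
  · obtain ⟨hy2, hz2, hx2⟩ :=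
      h.rotate.exponents_le_two_of_natDegree_le hqr hqp hy hz hx hrel.rotate
    exact ⟨hx2, hy2, hz2⟩
  · obtain ⟨hz2, hx2, hy2⟩ :=
      h.rotate.rotate.exponents_le_two_of_natDegree_le hrp hrq hz hx hy hrel.rotate.rotate
    exact ⟨hx2, hy2, hz2⟩

end ConicParametrization

section Pythagorean

variable {A B D : K[X]}

theorem conicParametrization_of_pythagorean (hpyth : A ^ 2 + B ^ 2 = D ^ 2) (hAB : IsCoprime A B)
    (hA : 0 < A.natDegree) : ConicParametrization A B D :=
  ⟨.of_add_eq hpyth, hAB, hA⟩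

theorem sq_add_eq_iff_of_pythagorean {S : Type*} [CommRing S] [IsDomain S] {a b d : S}
    (hpyth : a ^ 2 + b ^ 2 = d ^ 2) (ha : a ≠ 0) : a ^ 2 + b = d ↔ b + d = 1 := by
  refine ⟨fun h => mul_left_cancel₀ (pow_ne_zero 2 ha) ?_, fun h => ?_⟩
  · linear_combination (b + d) * h - hpyth
  · linear_combination hpyth + (d - b) * h

namespace ConicParametrization

variable [CharZero K]

theorem add_ne_of_pythagorean (h : ConicParametrization A B D) (hpyth : A ^ 2 + B ^ 2 = D ^ 2) :
    A + B ≠ D := by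
  intro hadd
  have hAB : 2 * (A * B) = 0 := by linear_combination (A + B + D) * hadd - hpyth
  exact mul_ne_zero two_ne_zero (mul_ne_zero h.ne_zero h.rotate.ne_zero) hAB

theorem add_ne_sq_of_pythagorean (h : ConicParametrization A B D)
    (hpyth : A ^ 2 + B ^ 2 = D ^ 2) : A + B ≠ D ^ 2 := by
  intro hadd
  have hdvd : D ∣ C 2 * (A * B) := by
    refine ⟨D ^ 3 - D, ?_⟩
    rw [map_ofNat]
    linear_combination (A + B + D ^ 2) * hadd - hpyth
  have hcop : IsCoprime D (A * B) := h.rotate.isCoprime_rotate.mul_right h.isCoprime_rotate.symm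
  exact not_isUnit_of_natDegree_pos D h.rotate.rotate.natDegree_pos
    (hcop.isUnit_of_dvd ((isUnit_C.2 two_ne_zero.isUnit).dvd_mul_left.1 hdvd))

theorem pow_add_pow_eq_pow_iff (h : ConicParametrization A B D) (hpyth : A ^ 2 + B ^ 2 = D ^ 2)
    (hx : 0 < x) (hy : 0 < y) (hz : 0 < z) :
    A ^ x + B ^ y = D ^ z ↔ (x = 2 ∧ y = 2 ∧ z = 2) ∨
      (x = 2 ∧ y = 1 ∧ z = 1 ∧ B + D = 1) ∨ (x = 1 ∧ y = 2 ∧ z = 1 ∧ A + D = 1) := by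
  have sq_add_iff : A ^ 2 + B = D ↔ B + D = 1 := sq_add_eq_iff_of_pythagorean hpyth h.ne_zero
  have add_sq_iff : A + B ^ 2 = D ↔ A + D = 1 := by
    rw [add_comm A]
    exact sq_add_eq_iff_of_pythagorean (by rwa [add_comm]) h.rotate.ne_zero
  constructor
  · intro hpow
    have hrel := FullRelation.of_add_eq hpow
    obtain ⟨hx2, hy2, hz2⟩ := h.exponents_le_two hx hy hz hrel
    have hsq_x : y = 2 → z = 2 → x = 2 := by
      rintro rfl rfl
      exact h.relation.eq_two_of_sq_sq hrel h.isCoprime h.natDegree_pos hx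
    have hsq_y : z = 2 → x = 2 → y = 2 := by
      rintro rfl rfl
      exact h.rotate.relation.eq_two_of_sq_sq hrel.rotate h.rotate.isCoprime
        h.rotate.natDegree_pos hy
    have hsq_z : x = 2 → y = 2 → z = 2 := by
      rintro rfl rfl
      exact h.rotate.rotate.relation.eq_two_of_sq_sq hrel.rotate.rotate h.rotate.rotate.isCoprime
        h.rotate.rotate.natDegree_pos hz
    interval_cases x <;> interval_cases y <;> interval_cases z <;>
      simp_all [h.add_ne_of_pythagorean hpyth, h.add_ne_sq_of_pythagorean hpyth]
  · rintro (⟨rfl, rfl, rfl⟩ | ⟨rfl, rfl, rfl, hone⟩ | ⟨rfl, rfl, rfl, hone⟩)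
    · exact hpyth
    · simpa only [pow_one] using sq_add_iff.2 hone
    · simpa only [pow_one] using add_sq_iff.2 hone

end ConicParametrization

theorem isCoprime_sq_sub_sq_mul {S : Type*} [CommRing S] {f g : S} (hfg : IsCoprime f g) :
    IsCoprime (f ^ 2 - g ^ 2) (f * g) := by
  have hf : IsCoprime (f ^ 2 - g ^ 2) f := by
    rw [show f ^ 2 - g ^ 2 = -g ^ 2 + f * f by ring]
    exact hfg.symm.pow_left.neg_left.add_mul_left_left f
  have hg : IsCoprime (f ^ 2 - g ^ 2) g := by
    rw [show f ^ 2 - g ^ 2 = f ^ 2 + g * -g by ring]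
    exact hfg.pow_left.add_mul_left_left (-g)
  exact hf.mul_right hg

theorem conicParametrization_of_isCoprime [NeZero (2 : K)] {f g w : K[X]}
    (hf : 0 < f.natDegree) (hg : g ≠ 0) (hfg : IsCoprime f g) (hw : IsUnit w) :
    ConicParametrization (w * (f ^ 2 - g ^ 2)) (w * (2 * f * g)) (w * (f ^ 2 + g ^ 2)) := by
  have h2 : IsUnit (2 : K[X]) := by
    rw [← map_ofNat C 2]
    exact isUnit_C.2 two_ne_zero.isUnit
  have hcop : IsCoprime (w * (f ^ 2 - g ^ 2)) (w * (2 * f * g)) := by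
    rw [isCoprime_mul_unit_left hw, mul_assoc, isCoprime_mul_unit_left_right h2]
    exact isCoprime_sq_sub_sq_mul hfg
  have hdeg : 0 < (w * (2 * f * g)).natDegree := by
    have hdvd : f ∣ w * (2 * f * g) := ⟨w * 2 * g, by ring⟩
    exact hf.trans_le (natDegree_le_of_dvd hdvd (mul_ne_zero hw.ne_zero
      (mul_ne_zero (mul_ne_zero h2.ne_zero (ne_zero_of_natDegree_gt hf)) hg)))
  exact (conicParametrization_of_pythagorean (by ring) hcop.symm hdeg).rotate.swap

end Pythagorean

end

theorem jesmanowicz_poly_primitive_case_general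
    {K : Type*} [Field K] [CharZero K]
    (f g w : K[X])
    (hf : 0 < f.natDegree) (hg : g ≠ 0)
    (hfg : IsCoprime f g) (hw : w ≠ 0) (hwc : w.natDegree = 0) :
    ∀ x y z : ℕ, 0 < x → 0 < y → 0 < z →
      ((w * (f ^ 2 - g ^ 2)) ^ x + (w * (2 * f * g)) ^ y = (w * (f ^ 2 + g ^ 2)) ^ z ↔
        ((x = 2 ∧ y = 2 ∧ z = 2) ∨
          (x = 2 ∧ y = 1 ∧ z = 1 ∧ w * (f + g) ^ 2 = 1))) := by
  intro x y z hx hy hz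
  have hw_unit : IsUnit w := by
    rw [eq_C_of_natDegree_eq_zero hwc] at hw ⊢
    exact isUnit_C.2 (C_ne_zero.1 hw).isUnit
  have hconic := conicParametrization_of_isCoprime hf hg hfg hw_unit
  have hBD : w * (2 * f * g) + w * (f ^ 2 + g ^ 2) = w * (f + g) ^ 2 := by ring
  have hAD : w * (f ^ 2 - g ^ 2) + w * (f ^ 2 + g ^ 2) ≠ 1 := fun hone =>
    not_isUnit_of_natDegree_pos f hf
      (.of_mul_eq_one (2 * w * f) (by linear_combination hone))
  rw [hconic.pow_add_pow_eq_pow_iff (by ring) hx hy hz, hBD]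
  simp only [hAD, and_false, or_false]

theorem jesmanowicz_poly_primitive_case
    {K : Type*} [Field K] [CharZero K] [IsAlgClosed K]
    (f g w : K[X])
    (hf : 0 < f.natDegree) (hg : 0 < g.natDegree)
    (hfg : IsCoprime f g) (hw : w ≠ 0) (hwc : w.natDegree = 0) :
    ∀ x y z : ℕ, 0 < x → 0 < y → 0 < z →
      ((w * (f ^ 2 - g ^ 2)) ^ x + (w * (2 * f * g)) ^ y = (w * (f ^ 2 + g ^ 2)) ^ z ↔
        ((x = 2 ∧ y = 2 ∧ z = 2) ∨
          (x = 2 ∧ y = 1 ∧ z = 1 ∧ w * (f + g) ^ 2 = 1))) :=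
  jesmanowicz_poly_primitive_case_general f g w hf (ne_zero_of_natDegree_gt hg) hfg hw hwc
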